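/- Under any uniformly avoiding source μ, for every fixed k-tuple α ∈ (Fin σ)^k and all indices i, j with k ≤ i and i + k ≤ j, the probability that α occurs both at position i and at position j satisfies μ(W_i = α and W_j = α) ≤ 1/(σ-k)^{2k}. -/

import Mathlib

open MeasureTheory ProbabilityTheory
open scoped Classical ENNReal

noncomputable section

/-- The `k`-window at position `i` of an infinite string `ω : ℕ → Fin σ`. -/
def Window {σ : ℕ} (k i : ℕ) (ω : ℕ → Fin σ) : Fin k → Fin σ :=
  fun t => ω (i + t)

/-- A *uniformly avoiding source*: a probability measure `μ` on `ℕ → Fin σ`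
(with the product σ-algebra) such that (i) almost surely the first `k`
coordinates are pairwise distinct, and (ii) conditioned on any positive-probability
history of length `n ≥ k` whose last `k` entries are pairwise distinct, the next
character is uniform on the `σ - k` characters not among the last `k` entries. -/
def UniformlyAvoiding {σ : ℕ} (k : ℕ) (μ : Measure (ℕ → Fin σ)) : Prop :=
  IsProbabilityMeasure μ ∧
  (∀ᵐ ω ∂μ, ∀ i j : ℕ, i < k → j < k → i ≠ j → ω i ≠ ω j) ∧
  ∀ n : ℕ, k ≤ n → ∀ a : ℕ → Fin σ,
    μ {ω | ∀ t < n, ω t = a t} ≠ 0 →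
    (∀ p q : ℕ, n - k ≤ p → p < n → n - k ≤ q → q < n → p ≠ q → a p ≠ a q) →
    ∀ b : Fin σ,
      (μ[|{ω | ∀ t < n, ω t = a t}]) {ω | ω n = b} =
        if ∃ t : ℕ, n - k ≤ t ∧ t < n ∧ a t = b then 0
        else 1 / ((σ - k : ℕ) : ℝ≥0∞)

/-!
Every history of length `n ≥ k` and positive probability has pairwise distinct last `k` entries, so
given that history the next letter takes any prescribed value with probability at most `(σ - k)⁻¹`.
An event determined by `X_0, …, X_{n-1}` is a disjoint union of histories, so the same bound holds
given the event. Peeling off the largest position repeatedly, letters prescribed at `m` positions,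
all at least `k`, occur with probability at most `(σ - k)⁻ᵐ`; two disjoint windows prescribe `2k`.
-/

section Fibers

variable {Ω β : Type*} [MeasurableSpace Ω] {μ : Measure Ω}

lemma measure_preimage_inter_le_mul [Countable β] {f : Ω → β} {T : Set Ω} {q : ℝ≥0∞}
    (hf : ∀ y, MeasurableSet (f ⁻¹' {y}))
    (h : ∀ y, μ (f ⁻¹' {y} ∩ T) ≤ q * μ (f ⁻¹' {y})) (s : Set β) :
    μ (f ⁻¹' s ∩ T) ≤ q * μ (f ⁻¹' s) :=
  calc μ (f ⁻¹' s ∩ T)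
    _ = μ (⋃ y ∈ s, f ⁻¹' {y} ∩ T) := by
        rw [← Set.biUnion_preimage_singleton, Set.iUnion₂_inter]
    _ ≤ ∑' y : s, μ (f ⁻¹' {y.1} ∩ T) := measure_biUnion_le μ s.to_countable _
    _ ≤ ∑' y : s, q * μ (f ⁻¹' {y.1}) := ENNReal.tsum_le_tsum fun y => h y
    _ = q * μ (f ⁻¹' s) := by
        rw [ENNReal.tsum_mul_left, tsum_measure_preimage_singleton s.to_countable fun y _ => hf y]

end Fibers

section Cylinders

variable {E : ℕ → Type*}

lemma cylinder_succ (x : ∀ n, E n) (n : ℕ) :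
    PiNat.cylinder x (n + 1) = PiNat.cylinder x n ∩ {ω | ω n = x n} := by
  ext ω
  exact Nat.forall_lt_succ_right

lemma domRestrict_Iio_preimage_singleton (x : ∀ n, E n) (n : ℕ) :
    (Set.Iio n).domRestrict ⁻¹' {(Set.Iio n).domRestrict x} = PiNat.cylinder x n := by
  ext ω
  simp [funext_iff]

variable [∀ n, MeasurableSpace (E n)] [∀ n, MeasurableSingletonClass (E n)]

lemma measurableSet_piNat_cylinder (x : ∀ n, E n) (n : ℕ) :
    MeasurableSet (PiNat.cylinder x n) := by
  rw [PiNat.cylinder_eq_pi]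
  exact .pi (Finset.countable_toSet _) fun i _ => measurableSet_singleton (x i)

variable [∀ n, Countable (E n)] {μ : Measure (∀ n, E n)}

lemma measure_inter_le_mul_of_dependsOn_Iio {n : ℕ} {S T : Set (∀ n, E n)} {q : ℝ≥0∞}
    (hS : DependsOn (· ∈ S) (Set.Iio n))
    (h : ∀ x, μ (PiNat.cylinder x n ∩ T) ≤ q * μ (PiNat.cylinder x n)) :
    μ (S ∩ T) ≤ q * μ S := by
  obtain ⟨s, hs⟩ := dependsOn_iff_exists_comp.mp hS
  obtain rfl : S = (Set.Iio n).domRestrict ⁻¹' s := hs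
  have fiber_eq (y : ∀ i : Set.Iio n, E i) :
      (Set.Iio n).domRestrict ⁻¹' {y} = ∅ ∨
        ∃ x, (Set.Iio n).domRestrict ⁻¹' {y} = PiNat.cylinder x n := by
    refine (Set.eq_empty_or_nonempty _).imp_right ?_
    rintro ⟨x, rfl⟩
    exact ⟨x, domRestrict_Iio_preimage_singleton x n⟩
  refine measure_preimage_inter_le_mul (fun y => ?_) (fun y => ?_) s
  · rcases fiber_eq y with hy | ⟨x, hy⟩ <;> rw [hy]
    exacts [.empty, measurableSet_piNat_cylinder x n]
  · rcases fiber_eq y with hy | ⟨x, hy⟩ <;> rw [hy]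
    exacts [by simp, h x]

lemma measure_forall_mem_eq_le_prod_mul (c : ∀ n, E n) (q : ℕ → ℝ≥0∞) (P : Finset ℕ)
    (h : ∀ n ∈ P, ∀ x, μ (PiNat.cylinder x n ∩ {ω | ω n = c n}) ≤ q n * μ (PiNat.cylinder x n)) :
    μ {ω | ∀ t ∈ P, ω t = c t} ≤ (∏ t ∈ P, q t) * μ Set.univ := by
  induction P using Finset.induction_on_max with
  | empty => simp
  | insert n P lt_n ih =>
    have dependsOn_past : DependsOn (· ∈ {ω : ∀ n, E n | ∀ t ∈ P, ω t = c t}) (Set.Iio n) :=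
      fun ω ω' hω => propext <| forall₂_congr fun t ht => by rw [hω t (lt_n t ht)]
    calc μ {ω | ∀ t ∈ insert n P, ω t = c t}
      _ = μ ({ω | ∀ t ∈ P, ω t = c t} ∩ {ω | ω n = c n}) := by
          simp only [Finset.forall_mem_insert, Set.ofPred_and, Set.inter_comm]
      _ ≤ q n * μ {ω | ∀ t ∈ P, ω t = c t} :=
          measure_inter_le_mul_of_dependsOn_Iio dependsOn_past (h n (P.mem_insert_self n))
      _ ≤ q n * ((∏ t ∈ P, q t) * μ Set.univ) := by
          gcongr
          exact ih fun t ht => h t (Finset.mem_insert_of_mem ht)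
      _ = (∏ t ∈ insert n P, q t) * μ Set.univ := by
          rw [Finset.prod_insert fun hn => (lt_n n hn).false, mul_assoc]

end Cylinders

lemma window_eq_window_iff {σ k i : ℕ} {ω ω' : ℕ → Fin σ} :
    Window k i ω = Window k i ω' ↔ ∀ t ∈ Finset.Ico i (i + k), ω t = ω' t := by
  simp only [funext_iff, Window, Fin.forall_iff, Finset.mem_Ico]
  refine ⟨fun h t ht => ?_, fun h t ht => h (i + t) (by omega)⟩
  simpa only [Nat.add_sub_cancel' ht.1] using h (t - i) (by omega)

namespace UniformlyAvoiding

variable {σ k n : ℕ} {μ : Measure (ℕ → Fin σ)}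

lemma measure_cylinder_inter (hμ : UniformlyAvoiding k μ) (hn : k ≤ n) {a : ℕ → Fin σ}
    (ha : Set.InjOn a (Set.Ico (n - k) n)) (b : Fin σ) :
    μ (PiNat.cylinder a n ∩ {ω | ω n = b}) =
      (if b ∈ a '' Set.Ico (n - k) n then 0 else ((σ - k : ℕ) : ℝ≥0∞)⁻¹) *
        μ (PiNat.cylinder a n) := by
  obtain ⟨_, -, cond_next⟩ := hμ
  by_cases hpos : μ (PiNat.cylinder a n) = 0
  · rw [hpos, mul_zero, measure_inter_null_of_null_left _ hpos]
  · have distinct (p q : ℕ) (hp : n - k ≤ p) (hp' : p < n) (hq : n - k ≤ q) (hq' : q < n)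
        (hpq : p ≠ q) : a p ≠ a q := ha.ne ⟨hp, hp'⟩ ⟨hq, hq'⟩ hpq
    rw [← cond_mul_eq_inter (measurableSet_piNat_cylinder a n)]
    congr 1
    simpa only [PiNat.cylinder, Set.mem_image, Set.mem_Ico, and_assoc, one_div]
      using cond_next n hn a hpos distinct b

lemma injOn_of_measure_cylinder_ne_zero (hμ : UniformlyAvoiding k μ) (hn : k ≤ n)
    {a : ℕ → Fin σ} (ha : μ (PiNat.cylinder a n) ≠ 0) : Set.InjOn a (Set.Ico (n - k) n) := by
  induction n, hn using Nat.le_induction with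
  | base =>
    obtain ⟨ω, hω, distinct⟩ : ∃ ω ∈ PiNat.cylinder a k,
        ∀ i j : ℕ, i < k → j < k → i ≠ j → ω i ≠ ω j :=
      ((frequently_ae_mem_iff.mpr ha).and_eventually hμ.2.1).exists
    intro p hp q hq hpq
    by_contra hne
    exact distinct p q hp.2 hq.2 hne (by rw [hω p hp.2, hω q hq.2, hpq])
  | succ n hn ih =>
    rw [cylinder_succ] at ha
    have inj : Set.InjOn a (Set.Ico (n - k) n) :=
      ih fun h => ha (measure_inter_null_of_null_left _ h)
    have fresh : a n ∉ a '' Set.Ico (n - k) n := by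
      intro hmem
      rw [hμ.measure_cylinder_inter hn inj, if_pos hmem, zero_mul] at ha
      exact ha rfl
    have inj_insert : Set.InjOn a (insert n (Set.Ico (n - k) n)) :=
      (Set.injOn_insert (by simp)).mpr ⟨inj, fresh⟩
    refine inj_insert.mono fun t ht => ?_
    simp only [Set.mem_insert_iff, Set.mem_Ico] at ht ⊢
    omega

lemma measure_cylinder_inter_le (hμ : UniformlyAvoiding k μ) (hn : k ≤ n) (a : ℕ → Fin σ)
    (b : Fin σ) :
    μ (PiNat.cylinder a n ∩ {ω | ω n = b}) ≤
      ((σ - k : ℕ) : ℝ≥0∞)⁻¹ * μ (PiNat.cylinder a n) := by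
  by_cases hpos : μ (PiNat.cylinder a n) = 0
  · rw [measure_inter_null_of_null_left _ hpos]
    exact zero_le
  · rw [hμ.measure_cylinder_inter hn (hμ.injOn_of_measure_cylinder_ne_zero hn hpos)]
    gcongr
    split_ifs <;> simp

lemma measure_forall_mem_eq_le (hμ : UniformlyAvoiding k μ) (c : ℕ → Fin σ) {P : Finset ℕ}
    (hP : ∀ t ∈ P, k ≤ t) :
    μ {ω | ∀ t ∈ P, ω t = c t} ≤ ((σ - k : ℕ) : ℝ≥0∞)⁻¹ ^ P.card := by
  have : IsProbabilityMeasure μ := hμ.1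
  simpa using measure_forall_mem_eq_le_prod_mul c (fun _ => ((σ - k : ℕ) : ℝ≥0∞)⁻¹) P
    fun n hn x => hμ.measure_cylinder_inter_le (hP n hn) x (c n)

end UniformlyAvoiding

/-- Under any uniformly avoiding source `μ`, for every fixed `k`-tuple `α` and indices
`k ≤ i` and `i + k ≤ j`, the probability that `α` occurs at both positions `i` and `j`
is at most `1/(σ-k)^(2k)`. -/
theorem double_occurrence_prob_le {σ k : ℕ} (hk : 1 ≤ k) (hσ : k < σ)
    (μ : Measure (ℕ → Fin σ)) (hμ : UniformlyAvoiding k μ)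
    (α : Fin k → Fin σ) (i j : ℕ) (hi : k ≤ i) (hj : i + k ≤ j) :
    μ {ω | Window k i ω = α ∧ Window k j ω = α} ≤ 1 / ((σ - k : ℕ) : ℝ≥0∞) ^ (2 * k) := by
  -- A realization `ω₀` of the event prescribes the letters, so no sequence has to be glued from `α`.
  rcases Set.eq_empty_or_nonempty {ω | Window k i ω = α ∧ Window k j ω = α}
    with hempty | ⟨ω₀, hωi, hωj⟩
  · simp [hempty]
  let P := Finset.Ico i (i + k) ∪ Finset.Ico j (j + k)
  have card_P : P.card = 2 * k := by
    have disj : Disjoint (Finset.Ico i (i + k)) (Finset.Ico j (j + k)) :=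
      Finset.disjoint_left.mpr fun t => by simp only [Finset.mem_Ico]; omega
    rw [Finset.card_union_of_disjoint disj, Nat.card_Ico, Nat.card_Ico]
    omega
  have le_of_mem_P : ∀ t ∈ P, k ≤ t := fun t => by
    simp only [P, Finset.mem_union, Finset.mem_Ico]
    omega
  calc μ {ω | Window k i ω = α ∧ Window k j ω = α}
    _ = μ {ω | ∀ t ∈ P, ω t = ω₀ t} := by
        simp_rw [P, Finset.forall_mem_union, ← window_eq_window_iff, hωi, hωj]
    _ ≤ ((σ - k : ℕ) : ℝ≥0∞)⁻¹ ^ P.card := hμ.measure_forall_mem_eq_le ω₀ le_of_mem_P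
    _ = 1 / ((σ - k : ℕ) : ℝ≥0∞) ^ (2 * k) := by rw [card_P, one_div, ENNReal.inv_pow]
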